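/- Let p be a prime and let L/K be a cyclic Galois extension of degree p of local fields of characteristic (0,p), with σ a generator of Gal(L/K). Then for every x ∈ L one has v(x − p^{−1}·tr_{L/K}(x)) ≥ v(σ(x) − x) − 1; equivalently, |x − p^{−1}tr_{L/K}(x)| ≤ |p|^{−1} |σ(x) − x| for any absolute value inducing v. -/

import Mathlib

/-!
Since `tr x = ∑ τ, τ x` over the `p` elements of the Galois group,
`x - p⁻¹ tr x = p⁻¹ ∑ τ, (x - τ x)`. Each `τ` is a power `σ ^ n`, and telescoping
`σ ^ n x - x = ∑ i < n, σ ^ i (σ x - x)`, together with the `σ`-invariance of the absolute value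
and the ultrametric inequality, bounds every term by `|σ x - x|`. One more use of the ultrametric
inequality gives the result.
-/

/-- Data exhibiting `L` as a local field of characteristic `(0, p)`: a multiplicative
nonarchimedean absolute value `a` (representing the absolute valuation `v` via
`a x = c ^ v x` for a base `0 < c < 1`), a uniformizer `ϖ` generating the (discrete)
value group, residue characteristic `p` (`a p < 1`), completeness, and perfectness of
the residue field (surjectivity of the `p`-power map on residues). -/
structure LocalFieldData (p : ℕ) (L : Type*) [Field L] where
  a : L → ℝ
  a_zero : a 0 = 0
  a_pos : ∀ x : L, x ≠ 0 → 0 < a x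
  a_mul : ∀ x y : L, a (x * y) = a x * a y
  a_add : ∀ x y : L, a (x + y) ≤ max (a x) (a y)
  ϖ : L
  ϖ_pos : 0 < a ϖ
  ϖ_lt_one : a ϖ < 1
  disc : ∀ x : L, x ≠ 0 → ∃ k : ℤ, a x = a ϖ ^ k
  res_char : a (p : L) < 1
  complete : ∀ u : ℕ → L,
    (∀ ε : ℝ, 0 < ε → ∃ N : ℕ, ∀ m ≥ N, ∀ n ≥ N, a (u m - u n) < ε) →
    ∃ l : L, ∀ ε : ℝ, 0 < ε → ∃ N : ℕ, ∀ n ≥ N, a (u n - l) < ε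
  perfect_res : ∀ x : L, a x ≤ 1 → ∃ y : L, a y ≤ 1 ∧ a (x - y ^ p) < 1

namespace LocalFieldData

variable {p : ℕ} {L : Type*} [Field L] (D : LocalFieldData p L)

theorem a_nonneg (x : L) : 0 ≤ D.a x := by
  by_cases hx : x = 0
  · rw [hx, D.a_zero]
  · exact (D.a_pos x hx).le

theorem a_neg (x : L) : D.a (-x) = D.a x := by
  have h : D.a (-x) * D.a (-x) = D.a x * D.a x := by
    rw [← D.a_mul, ← D.a_mul, neg_mul_neg]
  exact (mul_self_inj (D.a_nonneg _) (D.a_nonneg _)).1 h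

theorem a_sum_le {ι : Type*} (s : Finset ι) (f : ι → L) {C : ℝ} (hC : 0 ≤ C)
    (h : ∀ i ∈ s, D.a (f i) ≤ C) : D.a (∑ i ∈ s, f i) ≤ C :=
  Finset.sum_induction f (fun y => D.a y ≤ C)
    (fun y z hy hz => (D.a_add y z).trans (max_le hy hz)) (by rwa [D.a_zero]) h

/-- If `σ` preserves `D.a`, no power of `σ` moves `x` further than `σ` itself does. -/
theorem a_pow_sub_le {K : Type*} [Field K] [Algebra K L] (σ : L ≃ₐ[K] L)
    (hinv : ∀ x : L, D.a (σ x) = D.a x) (x : L) (n : ℕ) :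
    D.a ((σ ^ n) x - x) ≤ D.a (σ x - x) := by
  induction n with
  | zero => simpa [D.a_zero] using D.a_nonneg (σ x - x)
  | succ n ih =>
    have h : (σ ^ (n + 1)) x - x = σ ((σ ^ n) x - x) + (σ x - x) := by
      rw [pow_succ', AlgEquiv.mul_apply, map_sub]
      ring
    rw [h]
    refine (D.a_add _ _).trans (max_le ?_ le_rfl)
    rwa [hinv]

end LocalFieldData

/-- Let `L/K` be a cyclic Galois extension of degree `p` of local fields of
characteristic `(0,p)`, with `σ` a generator of `Gal(L/K)`.  Then for every `x ∈ L`,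
`v(x - p⁻¹ tr_{L/K}(x)) ≥ v(σ x - x) - 1`; multiplicatively,
`|x - p⁻¹ tr_{L/K}(x)| ≤ |p|⁻¹ * |σ x - x|`. -/
theorem sub_normalized_trace_bound_of_degree_p
    (p : ℕ) (hp : p.Prime)
    (K L : Type*) [Field K] [Field L] [CharZero K] [CharZero L] [Algebra K L]
    [IsGalois K L] [FiniteDimensional K L]
    (hdeg : Module.finrank K L = p)
    (DK : LocalFieldData p K) (DL : LocalFieldData p L)
    (hcompat : ∀ x : K, DL.a (algebraMap K L x) = DK.a x)
    (σ : L ≃ₐ[K] L) (hσ : ∀ τ : L ≃ₐ[K] L, τ ∈ Subgroup.zpowers σ)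
    (hinv : ∀ x : L, DL.a (σ x) = DL.a x) :
    ∀ x : L,
      DL.a (x - algebraMap K L ((p : K)⁻¹ * Algebra.trace K L x)) ≤
        (DL.a ((p : L)))⁻¹ * DL.a (σ x - x) := by
  intro x
  have hp0 : (p : L) ≠ 0 := Nat.cast_ne_zero.2 hp.ne_zero
  have hcard : Fintype.card (L ≃ₐ[K] L) = p := by
    rw [← Nat.card_eq_fintype_card, IsGalois.card_aut_eq_finrank, hdeg]
  -- Scaling by `p` turns the normalized trace into a sum over the Galois group.
  have key : (p : L) * (x - algebraMap K L ((p : K)⁻¹ * Algebra.trace K L x)) =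
      ∑ τ : L ≃ₐ[K] L, (x - τ x) := by
    rw [Finset.sum_sub_distrib, ← trace_eq_sum_automorphisms, Finset.sum_const,
      Finset.card_univ, hcard, nsmul_eq_mul, map_mul, map_inv₀, map_natCast, mul_sub,
      mul_inv_cancel_left₀ hp0]
  rw [le_inv_mul_iff₀ (DL.a_pos _ hp0), ← DL.a_mul, key]
  refine DL.a_sum_le _ _ (DL.a_nonneg _) fun τ _ => ?_
  -- The group is finite, so `τ` is a power of `σ` with a natural-number exponent.
  obtain ⟨n, rfl⟩ := mem_powers_iff_mem_zpowers.2 (hσ τ)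
  rw [← neg_sub, DL.a_neg]
  exact DL.a_pow_sub_le σ hinv x n
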